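/- Let x₀ ∈ ℝ² (the Euclidean plane), R > 0, m ≥ 0, and let φ be a real-valued function, twice continuously differentiable on a neighborhood of the closed ball B̄(x₀,R), satisfying the PDE Δφ(y) = 2·(e^{φ(y)} − e^{−2φ(y)}) for all y ∈ B̄(x₀,R) and the bounds 0 ≤ φ(y) ≤ m for all y ∈ B̄(x₀,R). Then ‖∇φ(x₀)‖ ≤ 2R·(e^{m} − e^{−2m}) + (4/(π·R))·m. -/

import Mathlib

/-- The Euclidean Laplacian on `ℝ²`: the sum of the two pure second partial derivatives. -/
noncomputable def lap2 (u : EuclideanSpace ℝ (Fin 2) → ℝ) (y : EuclideanSpace ℝ (Fin 2)) : ℝ :=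
  ∑ i : Fin 2,
    fderiv ℝ (fun z => fderiv ℝ u z (EuclideanSpace.single i 1)) y (EuclideanSpace.single i 1)

/-!
Let `u` be a function with oscillation at most `2A` on a ball of radius `R` about the origin of an
`n`-dimensional space, whose Laplacian has oscillation at most `2N`. For a unit vector `e`, the part
of `u` that is odd under the reflection in the hyperplane `e^⊥` has the same derivative at the
origin in the direction `e`, vanishes on the hyperplane, is at most `A`, and has Laplacian at least
`-N`. On the half-ball `⟪e, x⟫ > 0` the weak maximum principle places it below an explicit quadratic
polynomial vanishing at the origin, so the slope `n A / R + N R / 2` of that polynomial bounds the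
derivative of `u`. When `Δ φ = f ∘ φ` with `f` monotone, bounds on `φ` bound the oscillation of
`Δ φ`. In the plane the resulting term `m / R` is at most `4 m / (π R)` because `π ≤ 4`.
-/

open Set Filter Topology Metric Module Laplacian InnerProductSpace
open scoped RealInnerProductSpace

section SecondDerivative

theorem deriv_deriv_nonpos_of_isLocalMax {f : ℝ → ℝ} {a : ℝ} (h : IsLocalMax f a)
    (hf : ContinuousAt f a) : deriv (deriv f) a ≤ 0 := by
  by_contra! hpos
  have hmin : IsLocalMin f a := isLocalMin_of_deriv_deriv_pos hpos h.deriv_eq_zero hf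
  have hconst : f =ᶠ[𝓝 a] fun _ => f a := by
    filter_upwards [h, hmin] with t hle hge using le_antisymm hle hge
  have hzero : deriv (deriv f) a = 0 := by
    rw [hconst.deriv.deriv_eq]
    simp
  exact hpos.ne' hzero

section Line

variable {E F : Type*} [NormedAddCommGroup E] [NormedSpace ℝ E]
  [NormedAddCommGroup F] [NormedSpace ℝ F]

theorem hasDerivAt_comp_add_smul {f : E → F} {x v : E} {t : ℝ}
    (hf : DifferentiableAt ℝ f (x + t • v)) :
    HasDerivAt (fun s : ℝ => f (x + s • v)) (fderiv ℝ f (x + t • v) v) t := by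
  have hline : HasDerivAt (fun s : ℝ => x + s • v) v t := by
    simpa using ((hasDerivAt_id t).smul_const v).const_add x
  exact hf.hasFDerivAt.comp_hasDerivAt t hline

theorem fderiv_fderiv_nonpos_of_isLocalMax {f : E → ℝ} {x : E} (h : IsLocalMax f x)
    (hf : ContDiffAt ℝ 2 f x) (v : E) : fderiv ℝ (fderiv ℝ f) x v v ≤ 0 := by
  have hx : x + (0 : ℝ) • v = x := by simp
  have hline : Tendsto (fun t : ℝ => x + t • v) (𝓝 0) (𝓝 x) :=
    Continuous.tendsto' (by fun_prop) _ _ hx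
  have hfirst : deriv (fun t : ℝ => f (x + t • v)) =ᶠ[𝓝 0] fun t => fderiv ℝ f (x + t • v) v := by
    filter_upwards [hline.eventually (hf.eventually (by simp))] with t ht
    exact (hasDerivAt_comp_add_smul (ht.differentiableAt (by norm_num))).deriv
  have hsecond : HasDerivAt (fun t : ℝ => fderiv ℝ f (x + t • v) v)
      (fderiv ℝ (fderiv ℝ f) x v v) 0 := by
    have hdiff : DifferentiableAt ℝ (fderiv ℝ f) x :=
      (hf.fderiv_right (m := 1) (by norm_num)).differentiableAt (by norm_num)
    have hfderiv := hasDerivAt_comp_add_smul (v := v) (hx.symm ▸ hdiff)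
    rw [hx] at hfderiv
    simpa using hfderiv.clm_apply (hasDerivAt_const 0 v)
  have hmax : IsLocalMax (fun t : ℝ => f (x + t • v)) 0 := by
    filter_upwards [hline.eventually h] with t ht
    rwa [hx]
  have hcont : ContinuousAt (fun t : ℝ => f (x + t • v)) 0 :=
    hf.continuousAt.comp_of_eq (by fun_prop) hx
  rw [← hsecond.deriv, ← hfirst.deriv_eq]
  exact deriv_deriv_nonpos_of_isLocalMax hmax hcont

end Line

theorem hasDerivAt_le_of_eventually_le_right {f g : ℝ → ℝ} {f' g' a : ℝ} (hf : HasDerivAt f f' a)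
    (hg : HasDerivAt g g' a) (heq : f a = g a) (hle : ∀ᶠ t in 𝓝[>] a, f t ≤ g t) : f' ≤ g' := by
  have hslope {u : ℝ → ℝ} {u' : ℝ} (hu : HasDerivAt u u' a) :
      Tendsto (slope u a) (𝓝[>] a) (𝓝 u') :=
    (hasDerivAt_iff_tendsto_slope.1 hu).mono_left (nhdsGT_le_nhdsNE a)
  refine le_of_tendsto_of_tendsto (hslope hf) (hslope hg) ?_
  filter_upwards [hle, self_mem_nhdsWithin] with t ht hat
  rw [slope_def_field, slope_def_field, heq]
  have : 0 < t - a := sub_pos.2 hat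
  gcongr

end SecondDerivative

section Laplacian

variable {E F : Type*} [NormedAddCommGroup E] [InnerProductSpace ℝ E] [FiniteDimensional ℝ E]
  [NormedAddCommGroup F] [NormedSpace ℝ F]

theorem laplacian_eq_sum_fderiv_fderiv {ι : Type*} [Fintype ι] (v : OrthonormalBasis ι ℝ E)
    (f : E → F) (x : E) : Δ f x = ∑ i, fderiv ℝ (fderiv ℝ f) x (v i) (v i) := by
  simp [laplacian_eq_iteratedFDeriv_orthonormalBasis f v, iteratedFDeriv_two_apply]

theorem laplacian_comp_const_add (f : E → F) (a x : E) :
    Δ (fun y => f (a + y)) x = Δ f (a + x) := by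
  simp only [laplacian_eq_iteratedFDeriv_stdOrthonormalBasis, iteratedFDeriv_comp_add_left]

theorem laplacian_comp_linearIsometryEquiv (f : E → F) (g : E ≃ₗᵢ[ℝ] E) (x : E) :
    Δ (f ∘ g) x = Δ f (g x) := by
  let v := stdOrthonormalBasis ℝ E
  have hcomp : iteratedFDeriv ℝ 2 (f ∘ g) x =
      (iteratedFDeriv ℝ 2 f (g x)).compContinuousLinearMap fun _ => (g : E →L[ℝ] E) := by
    have h := g.toContinuousLinearEquiv.iteratedFDerivWithin_comp_right f uniqueDiffOn_univ
      (mem_univ (g x)) 2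
    rwa [preimage_univ, iteratedFDerivWithin_univ, iteratedFDerivWithin_univ] at h
  rw [laplacian_eq_iteratedFDeriv_orthonormalBasis (f ∘ g) v,
    laplacian_eq_iteratedFDeriv_orthonormalBasis f (v.map g)]
  simp [hcomp, iteratedFDeriv_two_apply]

theorem laplacian_bilinear_self_add_linear {ι : Type*} [Fintype ι] (v : OrthonormalBasis ι ℝ E)
    (B : E →L[ℝ] E →L[ℝ] F) (l : E →L[ℝ] F) (x : E) :
    Δ (fun y => B y y + l y) x = (2 : ℝ) • ∑ i, B (v i) (v i) := by
  have hfirst : fderiv ℝ (fun y => B y y + l y) = fun y => (B + B.flip) y + l := by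
    ext y d
    have hy : HasFDerivAt (fun y => B y y + l y) _ y :=
      (B.hasFDerivAt_of_bilinear (hasFDerivAt_id y) (hasFDerivAt_id y)).add l.hasFDerivAt
    simp [hy.fderiv]
  have hsecond : fderiv ℝ (fun y => (B + B.flip) y + l) x = B + B.flip :=
    ((B + B.flip).hasFDerivAt.add_const l).fderiv
  rw [laplacian_eq_sum_fderiv_fderiv v, hfirst, hsecond, Finset.smul_sum]
  simp [two_smul]

theorem laplacian_norm_sq (x : E) : Δ (fun y : E => ‖y‖ ^ 2) x = 2 * finrank ℝ E := by
  let B : E →L[ℝ] E →L[ℝ] ℝ :=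
    (isBoundedBilinearMap_inner (𝕜 := ℝ) (E := E)).toContinuousLinearMap
  have hB (y z : E) : B y z = ⟪y, z⟫ := rfl
  simpa [hB] using laplacian_bilinear_self_add_linear (stdOrthonormalBasis ℝ E) B 0 x

theorem laplacian_inner_mul_sub_inner (e x : E) (c : ℝ) :
    Δ (fun y => ⟪e, y⟫ * (c - ⟪e, y⟫)) x = -2 * ‖e‖ ^ 2 := by
  let v := stdOrthonormalBasis ℝ E
  have hquad : (fun y => ⟪e, y⟫ * (c - ⟪e, y⟫)) = fun y =>
      (-(innerSL ℝ e).smulRight (innerSL ℝ e)) y y + (c • innerSL ℝ e) y := by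
    ext y
    simp only [neg_apply, smul_apply, ContinuousLinearMap.smulRight_apply, innerSL_apply_apply,
      smul_eq_mul]
    ring
  rw [hquad, laplacian_bilinear_self_add_linear v, ← v.sum_sq_norm_inner_left e]
  simp [sq]

theorem laplacian_nonpos_of_isLocalMax {f : E → ℝ} {x : E} (h : IsLocalMax f x)
    (hf : ContDiffAt ℝ 2 f x) : Δ f x ≤ 0 := by
  rw [laplacian_eq_sum_fderiv_fderiv (stdOrthonormalBasis ℝ E)]
  exact Finset.sum_nonpos fun i _ => fderiv_fderiv_nonpos_of_isLocalMax h hf _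

end Laplacian

section MaximumPrinciple

variable {E : Type*} [NormedAddCommGroup E] [InnerProductSpace ℝ E] [FiniteDimensional ℝ E]
  {f : E → ℝ} {U : Set E} {C : ℝ}

theorem le_of_forall_mem_frontier_le_of_laplacian_pos (hU : IsOpen U)
    (hb : Bornology.IsBounded U) (hc : ContinuousOn f (closure U)) (hd : ContDiffOn ℝ 2 f U)
    (hΔ : ∀ x ∈ U, 0 < Δ f x) (hC : ∀ x ∈ frontier U, f x ≤ C) {z : E} (hz : z ∈ closure U) :
    f z ≤ C := by
  obtain ⟨x, hx, hmax⟩ := hb.isCompact_closure.exists_isMaxOn ⟨z, hz⟩ hc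
  have hxU : x ∉ U := fun hxU => by
    have hloc : IsLocalMax f x :=
      hmax.isLocalMax (mem_of_superset (hU.mem_nhds hxU) subset_closure)
    exact (hΔ x hxU).not_ge
      (laplacian_nonpos_of_isLocalMax hloc (hd.contDiffAt (hU.mem_nhds hxU)))
  exact (hmax hz).trans (hC x (hU.frontier_eq ▸ ⟨hx, hxU⟩))

theorem le_of_forall_mem_frontier_le_of_laplacian_nonneg [Nontrivial E] (hU : IsOpen U)
    (hb : Bornology.IsBounded U) (hc : ContinuousOn f (closure U)) (hd : ContDiffOn ℝ 2 f U)
    (hΔ : ∀ x ∈ U, 0 ≤ Δ f x) (hC : ∀ x ∈ frontier U, f x ≤ C) {z : E} (hz : z ∈ closure U) :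
    f z ≤ C := by
  let q : E → ℝ := fun x => ‖x‖ ^ 2
  have hq : ContDiff ℝ 2 q := contDiff_norm_sq ℝ
  obtain ⟨M, hM⟩ := (hb.isCompact_closure.image hq.continuous).bddAbove
  have hM (x) (hx : x ∈ closure U) : q x ≤ M := hM (mem_image_of_mem q hx)
  have hperturbed (ε : ℝ) (hε : 0 < ε) : f z + ε * q z ≤ C + ε * M := by
    have hεq : ContDiff ℝ 2 (ε • q) := hq.const_smul ε
    refine le_of_forall_mem_frontier_le_of_laplacian_pos (f := f + ε • q) hU hb
      (hc.add hεq.continuous.continuousOn) (hd.add hεq.contDiffOn)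
      (fun x hx => ?_) (fun x hx => ?_) hz
    · rw [(hd.contDiffAt (hU.mem_nhds hx)).laplacian_add hεq.contDiffAt,
        laplacian_smul ε hq.contDiffAt, laplacian_norm_sq, smul_eq_mul]
      have : 0 < finrank ℝ E := finrank_pos
      have := hΔ x hx
      positivity
    · have := hM x (frontier_subset_closure hx)
      have := hC x hx
      simp only [Pi.add_apply, Pi.smul_apply, smul_eq_mul]
      gcongr
  have hlim : Tendsto (fun ε : ℝ => C + ε * (M - q z)) (𝓝[>] 0) (𝓝 C) := by
    refine Tendsto.mono_left ?_ nhdsWithin_le_nhds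
    exact Continuous.tendsto' (by fun_prop) _ _ (by simp)
  refine ge_of_tendsto hlim ?_
  filter_upwards [self_mem_nhdsWithin] with ε hε
  linarith [hperturbed ε hε]

end MaximumPrinciple

section HalfBall

variable {E : Type*} [NormedAddCommGroup E] [InnerProductSpace ℝ E]

/-- The half of the open ball of radius `R` about the origin that lies on the side `⟪e, x⟫ > 0` of
the hyperplane orthogonal to `e`. -/
def halfBall (e : E) (R : ℝ) : Set E :=
  ball 0 R ∩ {x | 0 < ⟪e, x⟫}

/-- The comparison function on `halfBall e R` for functions that are at most `0` on the flat part of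
the boundary, at most `A` on the round part, and whose Laplacian is at least `-N`. -/
noncomputable def halfBallBarrier (e : E) (R A N : ℝ) (x : E) : ℝ :=
  A / R ^ 2 * (‖x‖ ^ 2 + finrank ℝ E * (⟪e, x⟫ * (R - ⟪e, x⟫))) + N / 2 * (⟪e, x⟫ * (R - ⟪e, x⟫))

variable {e : E} {R A N : ℝ}

theorem isOpen_halfBall : IsOpen (halfBall e R) :=
  isOpen_ball.inter (isOpen_lt continuous_const (by fun_prop))

theorem closure_halfBall_subset : closure (halfBall e R) ⊆ closedBall 0 R ∩ {x | 0 ≤ ⟪e, x⟫} :=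
  (closure_inter_subset_inter_closure _ _).trans <|
    inter_subset_inter closure_ball_subset_closedBall <|
      closure_lt_subset_le continuous_const (by fun_prop)

theorem frontier_halfBall_subset :
    frontier (halfBall e R) ⊆
      closedBall 0 R ∩ {x | ⟪e, x⟫ = 0} ∪ sphere 0 R ∩ {x | 0 ≤ ⟪e, x⟫} := by
  intro x hx
  rw [isOpen_halfBall.frontier_eq] at hx
  obtain ⟨hball, hpos⟩ := closure_halfBall_subset hx.1
  rcases eq_or_lt_of_le (show 0 ≤ ⟪e, x⟫ from hpos) with hzero | hlt
  · exact Or.inl ⟨hball, hzero.symm⟩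
  · refine Or.inr ⟨?_, hpos⟩
    have hnot : x ∉ ball 0 R := fun h => hx.2 ⟨h, hlt⟩
    exact le_antisymm hball (by simpa using hnot)

theorem contDiff_halfBallBarrier {k : WithTop ℕ∞} : ContDiff ℝ k (halfBallBarrier e R A N) := by
  have hnorm : ContDiff ℝ k fun x : E => ‖x‖ ^ 2 := contDiff_norm_sq ℝ
  have hinner : ContDiff ℝ k fun x : E => ⟪e, x⟫ := contDiff_const.inner ℝ contDiff_id
  unfold halfBallBarrier
  fun_prop

theorem halfBallBarrier_nonneg_of_inner_eq_zero (hA : 0 ≤ A) {x : E} (hx : ⟪e, x⟫ = 0) :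
    0 ≤ halfBallBarrier e R A N x := by
  simp only [halfBallBarrier, hx, zero_mul, mul_zero, add_zero]
  positivity

theorem le_halfBallBarrier_of_mem_sphere (he : ‖e‖ = 1) (hR : 0 < R) (hA : 0 ≤ A) (hN : 0 ≤ N)
    {x : E} (hx : x ∈ sphere 0 R) (hpos : 0 ≤ ⟪e, x⟫) : A ≤ halfBallBarrier e R A N x := by
  have hnorm : ‖x‖ = R := by simpa using hx
  have hle : ⟪e, x⟫ ≤ R := by simpa [he, hnorm] using real_inner_le_norm e x
  have hmul : 0 ≤ ⟪e, x⟫ * (R - ⟪e, x⟫) := mul_nonneg hpos (sub_nonneg.2 hle)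
  calc
    A = A / R ^ 2 * (R ^ 2 + 0) + 0 := by field_simp; ring
    _ ≤ halfBallBarrier e R A N x := by
      rw [halfBallBarrier, hnorm]
      gcongr
      · exact mul_nonneg (Nat.cast_nonneg _) hmul
      · exact mul_nonneg (by positivity) hmul

theorem hasDerivAt_halfBallBarrier_smul (he : ‖e‖ = 1) (hR : R ≠ 0) :
    HasDerivAt (fun t : ℝ => halfBallBarrier e R A N (t • e))
      (finrank ℝ E * A / R + N * R / 2) 0 := by
  have hformula : (fun t : ℝ => halfBallBarrier e R A N (t • e)) = fun t : ℝ =>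
      A / R ^ 2 * (t ^ 2 + finrank ℝ E * (t * (R - t))) + N / 2 * (t * (R - t)) := by
    ext t
    simp [halfBallBarrier, inner_smul_right, norm_smul, he]
  have hsq : HasDerivAt (fun t : ℝ => t ^ 2) 0 0 := by simpa using hasDerivAt_pow 2 (0 : ℝ)
  have hmul : HasDerivAt (fun t : ℝ => t * (R - t)) R 0 := by
    simpa using (hasDerivAt_id (0 : ℝ)).fun_mul ((hasDerivAt_id (0 : ℝ)).const_sub R)
  rw [hformula]
  refine (((hsq.fun_add (hmul.const_mul _)).const_mul _).fun_add (hmul.const_mul _)).congr_deriv ?_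
  field_simp
  ring

variable [FiniteDimensional ℝ E]

theorem laplacian_halfBallBarrier (he : ‖e‖ = 1) (x : E) :
    Δ (halfBallBarrier e R A N) x = -N := by
  let n : ℝ := finrank ℝ E
  let normSq : E → ℝ := fun y => ‖y‖ ^ 2
  let strip : E → ℝ := fun y => ⟪e, y⟫ * (R - ⟪e, y⟫)
  have hsum : halfBallBarrier e R A N = (A / R ^ 2) • (normSq + n • strip) + (N / 2) • strip := rfl
  have hnormSq : ContDiffAt ℝ 2 normSq x := (contDiff_norm_sq ℝ).contDiffAt
  have hstrip : ContDiffAt ℝ 2 strip x :=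
    (contDiffAt_const.inner ℝ contDiffAt_id).mul
      (contDiffAt_const.sub (contDiffAt_const.inner ℝ contDiffAt_id))
  have hsmul (c : ℝ) {g : E → ℝ} (hg : ContDiffAt ℝ 2 g x) : ContDiffAt ℝ 2 (c • g) x :=
    hg.const_smul c
  have hmain : ContDiffAt ℝ 2 (normSq + n • strip) x := hnormSq.add (hsmul n hstrip)
  rw [hsum, (hsmul _ hmain).laplacian_add (hsmul _ hstrip), laplacian_smul _ hmain,
    hnormSq.laplacian_add (hsmul n hstrip), laplacian_smul n hstrip, laplacian_smul _ hstrip,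
    laplacian_norm_sq, laplacian_inner_mul_sub_inner, he]
  simp only [smul_eq_mul, n]
  ring

theorem le_halfBallBarrier_of_neg_le_laplacian {w : E → ℝ} (he : ‖e‖ = 1) (hR : 0 < R) (hA : 0 ≤ A)
    (hN : 0 ≤ N) (hc : ContinuousOn w (closedBall 0 R)) (hd : ContDiffOn ℝ 2 w (ball 0 R))
    (hflat : ∀ x ∈ closedBall 0 R, ⟪e, x⟫ = 0 → w x ≤ 0) (hround : ∀ x ∈ sphere 0 R, w x ≤ A)
    (hΔ : ∀ x ∈ ball 0 R, -N ≤ Δ w x) {z : E} (hz : z ∈ halfBall e R) :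
    w z ≤ halfBallBarrier e R A N z := by
  have : Nontrivial E := nontrivial_of_ne e 0 (norm_ne_zero_iff.1 (by simp [he]))
  have hbarrier : ContDiff ℝ 2 (halfBallBarrier e R A N) := contDiff_halfBallBarrier
  have hdiff : (w - halfBallBarrier e R A N) z ≤ 0 := by
    refine le_of_forall_mem_frontier_le_of_laplacian_nonneg isOpen_halfBall
      (isBounded_ball.subset inter_subset_left)
      ((hc.mono fun x hx => (closure_halfBall_subset hx).1).sub hbarrier.continuous.continuousOn)
      ((hd.mono inter_subset_left).sub hbarrier.contDiffOn) (fun x hx => ?_) (fun x hx => ?_)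
      (subset_closure hz)
    · have hwx : ContDiffAt ℝ 2 w x := hd.contDiffAt (isOpen_ball.mem_nhds hx.1)
      rw [hwx.laplacian_sub hbarrier.contDiffAt, laplacian_halfBallBarrier he]
      linarith [hΔ x hx.1]
    · rcases frontier_halfBall_subset hx with ⟨hball, hzero⟩ | ⟨hsphere, hpos⟩
      · exact sub_nonpos.2 <| (hflat x hball hzero).trans <|
          halfBallBarrier_nonneg_of_inner_eq_zero hA hzero
      · exact sub_nonpos.2 <| (hround x hsphere).trans <|
          le_halfBallBarrier_of_mem_sphere he hR hA hN hsphere hpos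
  exact sub_nonpos.1 hdiff

theorem fderiv_zero_le_of_neg_le_laplacian {w : E → ℝ} (he : ‖e‖ = 1) (hR : 0 < R) (hA : 0 ≤ A)
    (hN : 0 ≤ N) (hc : ContinuousOn w (closedBall 0 R)) (hd : ContDiffOn ℝ 2 w (ball 0 R))
    (hflat : ∀ x ∈ closedBall 0 R, ⟪e, x⟫ = 0 → w x = 0) (hround : ∀ x ∈ sphere 0 R, w x ≤ A)
    (hΔ : ∀ x ∈ ball 0 R, -N ≤ Δ w x) :
    fderiv ℝ w 0 e ≤ finrank ℝ E * A / R + N * R / 2 := by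
  have hline : HasDerivAt (fun t : ℝ => w (t • e)) (fderiv ℝ w 0 e) 0 := by
    have hdiff : DifferentiableAt ℝ w 0 :=
      (hd.contDiffAt (ball_mem_nhds 0 hR)).differentiableAt (by norm_num)
    simpa using hasDerivAt_comp_add_smul (x := 0) (v := e) (t := 0) (by simpa using hdiff)
  refine hasDerivAt_le_of_eventually_le_right hline (hasDerivAt_halfBallBarrier_smul he hR.ne')
    ?_ ?_
  · simp [halfBallBarrier, hflat 0 (mem_closedBall_self hR.le)]
  · filter_upwards [Ioo_mem_nhdsGT hR] with t ht
    refine le_halfBallBarrier_of_neg_le_laplacian he hR hA hN hc hd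
      (fun x hx hzero => (hflat x hx hzero).le) hround hΔ ⟨?_, ?_⟩
    · simpa [norm_smul, he, abs_of_pos ht.1] using ht.2
    · simpa [inner_smul_right, he] using ht.1

end HalfBall

section OddPart

variable {E F : Type*} [NormedAddCommGroup E] [InnerProductSpace ℝ E] [NormedAddCommGroup F]
  [NormedSpace ℝ F] {e : E} {u : E → F}

/-- The part of `u` that is odd under the reflection `σ` in the hyperplane orthogonal to `e`,
that is `(u - u ∘ σ) / 2`. It vanishes on that hyperplane and has the same
derivative at the origin in the direction `e` as `u`. -/
noncomputable def oddPart (e : E) (u : E → F) : E → F :=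
  (1 / 2 : ℝ) • (u - u ∘ (ℝ ∙ e)ᗮ.reflection)

theorem oddPart_apply (x : E) :
    oddPart e u x = (1 / 2 : ℝ) • (u x - u ((ℝ ∙ e)ᗮ.reflection x)) :=
  rfl

theorem oddPart_eq_zero_of_inner_eq_zero {x : E} (hx : ⟪e, x⟫ = 0) : oddPart e u x = 0 := by
  have hfix : (ℝ ∙ e)ᗮ.reflection x = x :=
    Submodule.reflection_mem_subspace_eq_self <|
      Submodule.mem_orthogonal_singleton_iff_inner_right.2 hx
  rw [oddPart_apply, hfix, sub_self, smul_zero]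

theorem continuousOn_oddPart {R : ℝ} (hu : ContinuousOn u (closedBall 0 R)) :
    ContinuousOn (oddPart e u) (closedBall 0 R) := by
  have hcomp : ContinuousOn (u ∘ (ℝ ∙ e)ᗮ.reflection) (closedBall 0 R) :=
    hu.comp (LinearIsometryEquiv.continuous _).continuousOn fun x hx => by simpa using hx
  exact (hu.sub hcomp).const_smul (1 / 2 : ℝ)

theorem contDiffOn_oddPart {R : ℝ} {k : WithTop ℕ∞} (hu : ContDiffOn ℝ k u (ball 0 R)) :
    ContDiffOn ℝ k (oddPart e u) (ball 0 R) := by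
  have hcomp : ContDiffOn ℝ k (u ∘ (ℝ ∙ e)ᗮ.reflection) (ball 0 R) :=
    hu.comp (LinearIsometryEquiv.contDiff _).contDiffOn fun x hx => by simpa using hx
  exact (hu.sub hcomp).const_smul (1 / 2 : ℝ)

theorem fderiv_oddPart_zero (hu : DifferentiableAt ℝ u 0) :
    fderiv ℝ (oddPart e u) 0 e = fderiv ℝ u 0 e := by
  let σ := (ℝ ∙ e)ᗮ.reflection
  have hcomp : HasFDerivAt (u ∘ σ) (fderiv ℝ u 0 ∘L (σ : E →L[ℝ] E)) 0 :=
    HasFDerivAt.comp 0 (by simpa using hu.hasFDerivAt) σ.toContinuousLinearEquiv.hasFDerivAt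
  have hodd : HasFDerivAt (oddPart e u) _ 0 := (hu.hasFDerivAt.sub hcomp).const_smul (1 / 2 : ℝ)
  rw [hodd.fderiv]
  simp [σ, Submodule.reflection_orthogonalComplement_singleton_eq_neg, ← two_smul ℝ]

variable [FiniteDimensional ℝ E]

theorem laplacian_oddPart {x : E} (hx : ContDiffAt ℝ 2 u x)
    (hσx : ContDiffAt ℝ 2 u ((ℝ ∙ e)ᗮ.reflection x)) :
    Δ (oddPart e u) x = (1 / 2 : ℝ) • (Δ u x - Δ u ((ℝ ∙ e)ᗮ.reflection x)) := by
  have hcomp : ContDiffAt ℝ 2 (u ∘ (ℝ ∙ e)ᗮ.reflection) x :=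
    hσx.comp x (LinearIsometryEquiv.contDiff _).contDiffAt
  have hsub : ContDiffAt ℝ 2 (u - u ∘ (ℝ ∙ e)ᗮ.reflection) x := hx.sub hcomp
  rw [oddPart, laplacian_smul _ hsub, hx.laplacian_sub hcomp,
    laplacian_comp_linearIsometryEquiv]

end OddPart

section GradientEstimate

variable {E : Type*} [NormedAddCommGroup E] [InnerProductSpace ℝ E] [FiniteDimensional ℝ E]
  {u : E → ℝ} {R a b p q : ℝ}

theorem fderiv_zero_le_of_laplacian_mem_Icc {e : E} (he : ‖e‖ = 1) (hR : 0 < R)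
    (hc : ContinuousOn u (closedBall 0 R)) (hd : ContDiffOn ℝ 2 u (ball 0 R))
    (hu : ∀ x ∈ closedBall 0 R, u x ∈ Icc a b) (hΔ : ∀ x ∈ ball 0 R, Δ u x ∈ Icc p q) :
    fderiv ℝ u 0 e ≤ finrank ℝ E * (b - a) / (2 * R) + (q - p) * R / 4 := by
  have hat {x : E} (hx : x ∈ ball 0 R) : ContDiffAt ℝ 2 u x :=
    hd.contDiffAt (isOpen_ball.mem_nhds hx)
  have hball : (0 : E) ∈ ball 0 R := mem_ball_self hR
  have hab : a ≤ b := nonempty_Icc.1 ⟨_, hu 0 (ball_subset_closedBall hball)⟩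
  have hpq : p ≤ q := nonempty_Icc.1 ⟨_, hΔ 0 hball⟩
  have hodd : fderiv ℝ (oddPart e u) 0 e ≤
      finrank ℝ E * ((b - a) / 2) / R + (q - p) / 2 * R / 2 := by
    refine fderiv_zero_le_of_neg_le_laplacian he hR (by linarith) (by linarith)
      (continuousOn_oddPart hc) (contDiffOn_oddPart hd)
      (fun x _ => oddPart_eq_zero_of_inner_eq_zero) (fun x hx => ?_) (fun x hx => ?_)
    · have hx : x ∈ closedBall 0 R := sphere_subset_closedBall hx
      have hσx : (ℝ ∙ e)ᗮ.reflection x ∈ closedBall 0 R := by simpa using hx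
      rw [oddPart_apply, smul_eq_mul]
      linarith [(hu x hx).2, (hu _ hσx).1]
    · have hσx : (ℝ ∙ e)ᗮ.reflection x ∈ ball 0 R := by simpa using hx
      rw [laplacian_oddPart (hat hx) (hat hσx), smul_eq_mul]
      linarith [(hΔ x hx).1, (hΔ _ hσx).2]
  calc
    fderiv ℝ u 0 e = fderiv ℝ (oddPart e u) 0 e :=
      (fderiv_oddPart_zero ((hat hball).differentiableAt (by norm_num))).symm
    _ ≤ finrank ℝ E * ((b - a) / 2) / R + (q - p) / 2 * R / 2 := hodd
    _ = finrank ℝ E * (b - a) / (2 * R) + (q - p) * R / 4 := by ring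

theorem norm_gradient_le_of_laplacian_mem_Icc {x₀ : E} (hR : 0 < R)
    (hc : ContinuousOn u (closedBall x₀ R)) (hd : ContDiffOn ℝ 2 u (ball x₀ R))
    (hu : ∀ x ∈ closedBall x₀ R, u x ∈ Icc a b) (hΔ : ∀ x ∈ ball x₀ R, Δ u x ∈ Icc p q) :
    ‖gradient u x₀‖ ≤ finrank ℝ E * (b - a) / (2 * R) + (q - p) * R / 4 := by
  have hball {x : E} (hx : x ∈ ball 0 R) : x₀ + x ∈ ball x₀ R := by simpa using hx
  have hclosed {x : E} (hx : x ∈ closedBall 0 R) : x₀ + x ∈ closedBall x₀ R := by simpa using hx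
  have hdir (e : E) (he : ‖e‖ = 1) :
      fderiv ℝ u x₀ e ≤ finrank ℝ E * (b - a) / (2 * R) + (q - p) * R / 4 := by
    have h := fderiv_zero_le_of_laplacian_mem_Icc (u := fun x => u (x₀ + x)) he hR
      (hc.comp (by fun_prop) fun x hx => hclosed hx) (hd.comp (by fun_prop) fun x hx => hball hx)
      (fun x hx => hu _ (hclosed hx))
      (fun x hx => by simpa only [laplacian_comp_const_add] using hΔ _ (hball hx))
    simpa [fderiv_comp_add_left] using h
  have hab : a ≤ b := nonempty_Icc.1 ⟨_, hu x₀ (mem_closedBall_self hR.le)⟩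
  have hpq : p ≤ q := nonempty_Icc.1 ⟨_, hΔ x₀ (mem_ball_self hR)⟩
  have hnonneg : 0 ≤ finrank ℝ E * (b - a) / (2 * R) + (q - p) * R / 4 := by
    have := sub_nonneg.2 hab
    have := sub_nonneg.2 hpq
    positivity
  rw [← (toDual ℝ E).norm_map, toDual_gradient]
  refine ContinuousLinearMap.opNorm_le_of_unit_norm hnonneg fun e he => abs_le'.2 ⟨hdir e he, ?_⟩
  simpa using hdir (-e) (by rwa [norm_neg])

end GradientEstimate

theorem lap2_eq_laplacian {u : EuclideanSpace ℝ (Fin 2) → ℝ} {y : EuclideanSpace ℝ (Fin 2)}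
    (hu : ContDiffAt ℝ 2 u y) : lap2 u y = Δ u y := by
  have hdiff : DifferentiableAt ℝ (fderiv ℝ u) y :=
    (hu.fderiv_right (m := 1) (by norm_num)).differentiableAt (by norm_num)
  have hpartial (v : EuclideanSpace ℝ (Fin 2)) :
      fderiv ℝ (fun z => fderiv ℝ u z v) y v = fderiv ℝ (fderiv ℝ u) y v v := by
    rw [fderiv_clm_apply hdiff (differentiableAt_const v)]
    simp
  simp [lap2, laplacian_eq_sum_fderiv_fderiv (EuclideanSpace.basisFun (Fin 2) ℝ), hpartial]

theorem monotone_exp_sub_exp_neg_two_mul :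
    Monotone fun t : ℝ => 2 * (Real.exp t - Real.exp (-2 * t)) := by
  intro s t hst
  dsimp only
  gcongr 2 * (Real.exp ?_ - Real.exp ?_)
  linarith

theorem planar_gradient_bound_le {R m : ℝ} (hR : 0 < R) (hm : 0 ≤ m) :
    finrank ℝ (EuclideanSpace ℝ (Fin 2)) * (m - 0) / (2 * R) +
        (2 * (Real.exp m - Real.exp (-2 * m)) - 2 * (Real.exp 0 - Real.exp (-2 * 0))) * R / 4 ≤
      2 * R * (Real.exp m - Real.exp (-2 * m)) + 4 / (Real.pi * R) * m := by
  have hexp : 0 ≤ Real.exp m - Real.exp (-2 * m) :=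
    sub_nonneg.2 (Real.exp_le_exp.2 (by linarith))
  calc
    _ = R / 2 * (Real.exp m - Real.exp (-2 * m)) + 4 / (4 * R) * m := by
      simp only [finrank_euclideanSpace_fin, mul_zero, Real.exp_zero]
      field_simp
      ring
    _ ≤ 2 * R * (Real.exp m - Real.exp (-2 * m)) + 4 / (Real.pi * R) * m := by
      gcongr
      · linarith
      · exact Real.pi_le_four

theorem stmt11_general {E : Type*} [NormedAddCommGroup E] [InnerProductSpace ℝ E]
    [FiniteDimensional ℝ E] {x₀ : E} {R a b : ℝ} (hR : 0 < R) {f : ℝ → ℝ}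
    (hf : MonotoneOn f (Icc a b)) {φ : E → ℝ} (hc : ContinuousOn φ (closedBall x₀ R))
    (hd : ContDiffOn ℝ 2 φ (ball x₀ R)) (hpde : ∀ y ∈ ball x₀ R, Δ φ y = f (φ y))
    (hφ : ∀ y ∈ closedBall x₀ R, φ y ∈ Icc a b) :
    ‖gradient φ x₀‖ ≤ finrank ℝ E * (b - a) / (2 * R) + (f b - f a) * R / 4 := by
  refine norm_gradient_le_of_laplacian_mem_Icc hR hc hd hφ fun y hy => ?_
  have hy' := hφ y (ball_subset_closedBall hy)
  have hab : a ≤ b := hy'.1.trans hy'.2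
  rw [hpde y hy]
  exact ⟨hf (left_mem_Icc.2 hab) hy' hy'.1, hf hy' (right_mem_Icc.2 hab) hy'.2⟩

theorem stmt11 (x₀ : EuclideanSpace ℝ (Fin 2)) (R : ℝ) (hR : 0 < R)
    (m : ℝ) (hm : 0 ≤ m)
    (φ : EuclideanSpace ℝ (Fin 2) → ℝ)
    (U : Set (EuclideanSpace ℝ (Fin 2))) (hU : IsOpen U)
    (hUball : Metric.closedBall x₀ R ⊆ U)
    (hφ : ContDiffOn ℝ 2 φ U)
    (hpde : ∀ y ∈ Metric.closedBall x₀ R,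
      lap2 φ y = 2 * (Real.exp (φ y) - Real.exp (-2 * φ y)))
    (hlow : ∀ y ∈ Metric.closedBall x₀ R, 0 ≤ φ y)
    (hhigh : ∀ y ∈ Metric.closedBall x₀ R, φ y ≤ m) :
    ‖gradient φ x₀‖ ≤
      2 * R * (Real.exp m - Real.exp (-2 * m)) + 4 / (Real.pi * R) * m := by
  have hat (y) (hy : y ∈ ball x₀ R) : ContDiffAt ℝ 2 φ y :=
    hφ.contDiffAt (hU.mem_nhds (hUball (ball_subset_closedBall hy)))
  exact (stmt11_general hR (monotone_exp_sub_exp_neg_two_mul.monotoneOn _)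
    (hφ.continuousOn.mono hUball) (hφ.mono (ball_subset_closedBall.trans hUball))
    (fun y hy => lap2_eq_laplacian (hat y hy) ▸ hpde y (ball_subset_closedBall hy))
    fun y hy => ⟨hlow y hy, hhigh y hy⟩).trans (planar_gradient_bound_le hR hm)
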